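/- arXiv:1403.5275 — 2 statements merged into one kernel-verified Lean document; each statement's English description precedes it below -/
import Mathlib

section
/- The sequence of normalized Lobachevsky splines f_n*(x) = a√(n/3) · f_n(a√(n/3) · x) converges pointwise (indeed uniformly on ℝ) as n → ∞ to the standard normal density (1/√(2π)) exp(−x²/2). -/
open MeasureTheory Filter

noncomputable def lob (a : ℝ) : ℕ → ℝ → ℝ
  | 0 => fun _ => 0
  | 1 => fun x => if |x| ≤ a then 1 / (2 * a) else 0
  | (n + 2) => fun x => (1 / (2 * a)) * ∫ t in (x - a)..(x + a), lob a (n + 1) t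

/-- Normalized Lobachevsky spline `f_n*(x) = a√(n/3) f_n(a√(n/3) x)`. -/
noncomputable def lobStar (a : ℝ) (n : ℕ) (x : ℝ) : ℝ :=
  a * Real.sqrt (n / 3) * lob a n (a * Real.sqrt (n / 3) * x)

/-- Standard normal density. -/
noncomputable def stdNormal (x : ℝ) : ℝ :=
  (1 / Real.sqrt (2 * Real.pi)) * Real.exp (-x ^ 2 / 2)

open scoped FourierTransform Convolution Topology

theorem sinc_sq_le (y : ℝ) : Real.sinc y ^ 2 ≤ (1 + y ^ 2 / 4)⁻¹ := by
  rcases eq_or_ne y 0 with rfl | hy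
  · simp
  have hy2 : 0 < y ^ 2 := by positivity
  have hpi := Real.pi_gt_three
  by_cases h : |y| ≤ Real.pi
  · obtain ⟨h1, h2⟩ := abs_le.mp h
    have hc0 : 0 ≤ Real.cos (y / 2) :=
      Real.cos_nonneg_of_mem_Icc ⟨by linarith, by linarith⟩
    have hc := Real.cos_le_one_div_sqrt_sq_add_one (x := y / 2) (by linarith) (by linarith)
    have e : Real.sinc y = Real.sinc (y / 2) * Real.cos (y / 2) := by
      rw [Real.sinc_of_ne_zero hy, Real.sinc_of_ne_zero (by positivity)]
      have : Real.sin y = 2 * Real.sin (y / 2) * Real.cos (y / 2) := by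
        rw [← Real.sin_two_mul]; congr 1; ring
      rw [this]; field_simp
    have hs : Real.sinc (y / 2) ^ 2 ≤ 1 := by
      rw [← sq_abs]; exact pow_le_one₀ (abs_nonneg _) (Real.abs_sinc_le_one _)
    calc Real.sinc y ^ 2 = Real.sinc (y / 2) ^ 2 * Real.cos (y / 2) ^ 2 := by rw [e]; ring
      _ ≤ 1 * Real.cos (y / 2) ^ 2 := by gcongr
      _ ≤ (1 / √((y / 2) ^ 2 + 1)) ^ 2 := by rw [one_mul]; gcongr
      _ = (1 + y ^ 2 / 4)⁻¹ := by
        rw [div_pow, Real.sq_sqrt (by positivity), one_pow, one_div]; congr 1; ring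
  · push Not at h
    have h9 : 9 ≤ y ^ 2 := by rw [← sq_abs]; nlinarith
    rw [Real.sinc_of_ne_zero hy, div_pow]
    calc Real.sin y ^ 2 / y ^ 2 ≤ 1 / y ^ 2 := by gcongr; exact Real.sin_sq_le_one y
      _ = (y ^ 2)⁻¹ := one_div _
      _ ≤ (1 + y ^ 2 / 4)⁻¹ := by apply inv_anti₀ (by positivity); linarith

theorem sinc_approx (y : ℝ) (hy : |y| ≤ 1) : |Real.sinc y - 1 + y ^ 2 / 6| ≤ y ^ 4 / 100 := by
  rcases eq_or_ne y 0 with rfl | h0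
  · simp
  have hb := Real.sin_bound hy
  have hp : 0 < |y| := abs_pos.mpr h0
  have e : Real.sin y - (y - y ^ 3 / 6) = y * (Real.sinc y - 1 + y ^ 2 / 6) := by
    rw [Real.sinc_of_ne_zero h0]; field_simp; ring
  rw [e, abs_mul] at hb
  have e4 : y ^ 4 = |y| ^ 4 := by rw [← abs_pow, abs_of_nonneg (by positivity)]
  rw [e4]
  refine le_of_mul_le_mul_left (hb.trans (le_of_eq ?_)) hp
  ring

theorem sinc_pow_tendsto (v : ℝ) :
    Tendsto (fun n : ℕ => Real.sinc (2 * Real.pi * √(3 / n) * v) ^ n) atTop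
      (𝓝 (Real.exp (-(2 * Real.pi ^ 2 * v ^ 2)))) := by
  set K : ℝ := 12 * Real.pi ^ 2 * v ^ 2 with hK
  have hK0 : 0 ≤ K := by positivity
  have key : Tendsto (fun n : ℕ => (n : ℝ) * (Real.sinc (2 * Real.pi * √(3 / n) * v) - 1)) atTop
      (𝓝 (-(2 * Real.pi ^ 2 * v ^ 2))) := by
    rw [tendsto_iff_norm_sub_tendsto_zero]
    have hlim : Tendsto (fun n : ℕ => (K ^ 2 / 100) / (n : ℝ)) atTop (𝓝 0) :=
      tendsto_const_div_atTop_nhds_zero_nat _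
    refine squeeze_zero' (Eventually.of_forall fun n => norm_nonneg _) ?_ hlim
    filter_upwards [eventually_ge_atTop 1, eventually_ge_atTop ⌈K⌉₊] with n hn1 hnK
    have hn : (0 : ℝ) < n := by exact_mod_cast hn1
    have hKn : K ≤ n := Nat.ceil_le.mp hnK
    set y := 2 * Real.pi * √(3 / n) * v with hy
    have hy2 : y ^ 2 = K / n := by
      rw [hy, mul_pow, mul_pow, mul_pow, Real.sq_sqrt (by positivity), hK]; ring
    have hy1 : |y| ≤ 1 := by
      rw [← sq_le_one_iff_abs_le_one, hy2]; exact div_le_one_of_le₀ hKn hn.le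
    have hb := sinc_approx y hy1
    have e : (n : ℝ) * (Real.sinc y - 1) - -(2 * Real.pi ^ 2 * v ^ 2)
        = n * (Real.sinc y - 1 + y ^ 2 / 6) := by
      rw [hy2, hK]; field_simp; ring
    rw [e, Real.norm_eq_abs, abs_mul, abs_of_pos hn]
    calc (n : ℝ) * |Real.sinc y - 1 + y ^ 2 / 6| ≤ n * (y ^ 4 / 100) := by gcongr
      _ = K ^ 2 / 100 / n := by
        rw [show y ^ 4 = (y ^ 2) ^ 2 by ring, hy2]; field_simp
  have := Real.tendsto_one_add_pow_exp_of_tendsto key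
  simpa using this

theorem sinc_pow_bound (n : ℕ) (hn : 2 ≤ n) (v : ℝ) :
    |Real.sinc (2 * Real.pi * √(3 / n) * v) ^ n| ≤ (1 + v ^ 2)⁻¹ := by
  have hn0 : (2 : ℝ) ≤ n := by exact_mod_cast hn
  set y := 2 * Real.pi * √(3 / n) * v with hy
  have hy2 : y ^ 2 = 12 * Real.pi ^ 2 * v ^ 2 / n := by
    rw [hy, mul_pow, mul_pow, mul_pow, Real.sq_sqrt (by positivity)]; ring
  have h1 : |Real.sinc y ^ n| = (Real.sinc y ^ 2) ^ ((n : ℝ) / 2) := by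
    rw [abs_pow, ← sq_abs, ← Real.rpow_natCast, ← Real.rpow_natCast, ← Real.rpow_mul (abs_nonneg _)]
    congr 1; push_cast; ring
  rw [h1]
  calc (Real.sinc y ^ 2) ^ ((n : ℝ) / 2) ≤ ((1 + y ^ 2 / 4)⁻¹) ^ ((n : ℝ) / 2) :=
        Real.rpow_le_rpow (sq_nonneg _) (sinc_sq_le y) (by positivity)
    _ = ((1 + y ^ 2 / 4) ^ ((n : ℝ) / 2))⁻¹ := Real.inv_rpow (by positivity) _
    _ ≤ (1 + v ^ 2)⁻¹ := by
        apply inv_anti₀ (by positivity)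
        refine le_trans ?_ (one_add_mul_self_le_rpow_one_add (s := y ^ 2 / 4)
          (by have := sq_nonneg y; linarith) (p := (n : ℝ) / 2) (by linarith))
        rw [hy2]
        have : (n : ℝ) / 2 * (12 * Real.pi ^ 2 * v ^ 2 / n / 4) = (3 / 2) * Real.pi ^ 2 * v ^ 2 := by
          field_simp; ring
        rw [this]
        have := Real.pi_gt_three
        have h9 : 1 ≤ (3 / 2) * Real.pi ^ 2 := by nlinarith
        nlinarith [sq_nonneg v]

noncomputable def lobC (a : ℝ) (n : ℕ) (x : ℝ) : ℂ := (lob a n x : ℂ)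

theorem lobC_one (a : ℝ) : lobC a 1 = (Set.Icc (-a) a).indicator (fun _ => (1 / (2 * a) : ℂ)) := by
  ext x
  by_cases h : |x| ≤ a
  · simp [lobC, lob, h, abs_le.mp h]
  · have : ¬ (-a ≤ x ∧ x ≤ a) := fun h' => h (abs_le.mpr h')
    simp only [lobC, lob, h, Set.indicator, Set.mem_Icc, this]; simp

theorem lobC_one_integrable (a : ℝ) : Integrable (lobC a 1) := by
  rw [lobC_one, integrable_indicator_iff measurableSet_Icc]
  exact continuousOn_const.integrableOn_compact isCompact_Icc

theorem lobC_succ (a : ℝ) (ha : 0 < a) (n : ℕ) :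
    lobC a (n + 2) = (lobC a 1) ⋆[ContinuousLinearMap.mul ℂ ℂ] (lobC a (n + 1)) := by
  ext x
  have h0 : ((lobC a 1) ⋆[ContinuousLinearMap.mul ℂ ℂ] (lobC a (n + 1))) x
      = ∫ t, lobC a 1 (x - t) * lobC a (n+1) t := convolution_eq_swap _ 
  rw [h0]
  have h1 : ∀ t, lobC a 1 (x - t) * lobC a (n+1) t =
      (Set.Icc (x - a) (x + a)).indicator (fun t => (1 / (2 * a) : ℂ) * lobC a (n+1) t) t := by
    intro t
    rw [lobC_one]
    by_cases h : t ∈ Set.Icc (x - a) (x + a)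
    · rw [Set.indicator_of_mem h, Set.indicator_of_mem]
      simp only [Set.mem_Icc] at *; constructor <;> linarith
    · rw [Set.indicator_of_notMem h, Set.indicator_of_notMem, zero_mul]
      simp only [Set.mem_Icc] at *; intro h'; apply h; constructor <;> linarith
  simp_rw [h1]
  rw [integral_indicator measurableSet_Icc, integral_Icc_eq_integral_Ioc,
    ← intervalIntegral.integral_of_le (by linarith), intervalIntegral.integral_const_mul]
  simp only [lobC, lob]
  push_cast [intervalIntegral.integral_ofReal]
  rfl

theorem lobC_integrable (a : ℝ) (ha : 0 < a) (n : ℕ) : Integrable (lobC a (n + 1)) := by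
  induction n with
  | zero => exact lobC_one_integrable a
  | succ n ih =>
    rw [lobC_succ a ha]
    exact (lobC_one_integrable a).integrable_convolution _ ih

theorem lobC_continuous (a : ℝ) (ha : 0 < a) (n : ℕ) : Continuous (lobC a (n + 2)) := by
  have hi : Integrable (lob a (n + 1)) := (lobC_integrable a ha n).re
  have hii : ∀ u v, IntervalIntegrable (lob a (n+1)) volume u v := fun u v => hi.intervalIntegrable
  have : ∀ x, lob a (n + 2) x = (1 / (2 * a)) *
      ((∫ t in (0:ℝ)..(x + a), lob a (n + 1) t) - ∫ t in (0:ℝ)..(x - a), lob a (n+1) t) := by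
    intro x
    rw [intervalIntegral.integral_interval_sub_left (hii _ _) (hii _ _)]
    rfl
  have hc := intervalIntegral.continuous_primitive hii 0
  unfold lobC
  simp_rw [this]
  refine Complex.continuous_ofReal.comp (continuous_const.mul ((hc.comp (by fun_prop : Continuous fun x => x + a)).sub (hc.comp (by fun_prop : Continuous fun x => x - a))))

theorem fourier_lobC_one (a : ℝ) (ha : 0 < a) (w : ℝ) :
    𝓕 (lobC a 1) w = (Real.sinc (2 * Real.pi * a * w) : ℂ) := by
  rw [Real.fourier_real_eq_integral_exp_smul, lobC_one]
  have : ∀ v : ℝ, Complex.exp (↑(-2 * Real.pi * v * w) * Complex.I) •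
      (Set.Icc (-a) a).indicator (fun _ => (1 / (2 * a) : ℂ)) v =
      (Set.Icc (-a) a).indicator (fun v : ℝ => Complex.exp ((↑(-2 * Real.pi * w) * Complex.I) * v) * (1 / (2 * a) : ℂ)) v := by
    intro v
    by_cases h : v ∈ Set.Icc (-a) a
    · rw [Set.indicator_of_mem h, Set.indicator_of_mem h, smul_eq_mul]
      congr 2; push_cast; ring
    · rw [Set.indicator_of_notMem h, Set.indicator_of_notMem h, smul_zero]
  simp_rw [this]
  rw [integral_indicator measurableSet_Icc, integral_Icc_eq_integral_Ioc,
    ← intervalIntegral.integral_of_le (by linarith), intervalIntegral.integral_mul_const]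
  have hac : (a : ℂ) ≠ 0 := by exact_mod_cast ha.ne'
  rcases eq_or_ne w 0 with rfl | hw
  · simp; field_simp; ring
  have hp : (Real.pi : ℂ) ≠ 0 := by exact_mod_cast Real.pi_ne_zero
  have hwc : (w : ℂ) ≠ 0 := by exact_mod_cast hw
  rw [integral_exp_mul_complex (by simp [hw, Real.pi_ne_zero]), Real.sinc_of_ne_zero (by positivity)]
  push_cast
  rw [Complex.sin]
  have e1 : (-2 * Real.pi * w * Complex.I * a : ℂ) = -(2 * Real.pi * a * w) * Complex.I := by ring
  have e2 : (-2 * Real.pi * w * Complex.I * -a : ℂ) = (2 * Real.pi * a * w) * Complex.I := by ring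
  rw [e1, e2]
  have := Complex.I_ne_zero
  field_simp
  rw [Complex.I_sq]
  ring

theorem fourier_lobC (a : ℝ) (ha : 0 < a) (n : ℕ) (w : ℝ) :
    𝓕 (lobC a (n + 1)) w = (Real.sinc (2 * Real.pi * a * w) : ℂ) ^ (n + 1) := by
  induction n with
  | zero => simpa using fourier_lobC_one a ha w
  | succ n ih =>
    rw [lobC_succ a ha, Real.fourier_mul_convolution_eq (lobC_one_integrable a)
      (lobC_integrable a ha n), ih, fourier_lobC_one a ha, pow_succ' _ (n + 1)]

theorem stdNormal_eq (x : ℝ) : (stdNormal x : ℂ) =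
    ∫ v : ℝ, Complex.exp (↑(2 * Real.pi * v * x) * Complex.I) *
      ((Real.exp (-(2 * Real.pi ^ 2 * v ^ 2)) : ℝ) : ℂ) := by
  have hp : (Real.pi : ℂ) ≠ 0 := by exact_mod_cast Real.pi_ne_zero
  have h := fourierIntegral_gaussian (b := ((2 * Real.pi ^ 2 : ℝ) : ℂ))
    (by rw [Complex.ofReal_re]; positivity) (2 * Real.pi * x)
  have e : ∀ v : ℝ, Complex.exp (↑(2 * Real.pi * v * x) * Complex.I) *
      ((Real.exp (-(2 * Real.pi ^ 2 * v ^ 2)) : ℝ) : ℂ) =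
      Complex.exp (Complex.I * (2 * Real.pi * x) * v) *
      Complex.exp (-((2 * Real.pi ^ 2 : ℝ) : ℂ) * v ^ 2) := by
    intro v
    push_cast
    congr 2 <;> ring
  simp_rw [e]
  rw [h]
  have e1 : ((Real.pi : ℂ) / ((2 * Real.pi ^ 2 : ℝ) : ℂ)) ^ (1 / 2 : ℂ)
      = ((1 / √(2 * Real.pi) : ℝ) : ℂ) := by
    have : ((Real.pi : ℂ) / ((2 * Real.pi ^ 2 : ℝ) : ℂ)) = ((1 / (2 * Real.pi) : ℝ) : ℂ) := by
      push_cast; field_simp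
    rw [this, show (1 / 2 : ℂ) = ((1 / 2 : ℝ) : ℂ) by push_cast; rfl,
      ← Complex.ofReal_cpow (by positivity), ← Real.sqrt_eq_rpow, Real.sqrt_div zero_le_one,
      Real.sqrt_one]
  rw [e1, stdNormal]
  push_cast
  congr 2
  field_simp
  ring

theorem sinc_pow_integrable (n : ℕ) (hn : 2 ≤ n) :
    Integrable (fun v : ℝ => Real.sinc (2 * Real.pi * √(3 / n) * v) ^ n) := by
  refine integrable_inv_one_add_sq.mono' ?_ (Eventually.of_forall fun v => sinc_pow_bound n hn v)
  exact ((Real.continuous_sinc.comp (by fun_prop)).pow n).aestronglyMeasurable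

theorem lobStar_eq (a : ℝ) (ha : 0 < a) (n : ℕ) (hn : 2 ≤ n) (x : ℝ) :
    (lobStar a n x : ℂ) =
    ∫ v : ℝ, Complex.exp (↑(2 * Real.pi * v * x) * Complex.I) *
      ((Real.sinc (2 * Real.pi * √(3 / n) * v) ^ n : ℝ) : ℂ) := by
  have hnpos : (0 : ℝ) < n := by exact_mod_cast (by omega : 0 < n)
  set s : ℝ := a * √(n / 3) with hs
  have hs0 : 0 < s := by positivity
  have hsa : √(3 / n) * s = a := by
    rw [hs, mul_left_comm, ← Real.sqrt_mul (by positivity),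
      show (3 / n * (n / 3) : ℝ) = 1 by field_simp, Real.sqrt_one, mul_one]
  have hF : ∀ w, 𝓕 (lobC a n) w =
      ((Real.sinc (2 * Real.pi * √(3 / n) * (s * w)) ^ n : ℝ) : ℂ) := by
    intro w
    obtain ⟨m, rfl⟩ : ∃ m, n = m + 1 := ⟨n - 1, by omega⟩
    rw [fourier_lobC a ha]
    push_cast
    congr 3
    rw [← hsa]; push_cast; ring
  have hcont : Continuous (lobC a n) := by
    obtain ⟨m, rfl⟩ : ∃ m, n = m + 2 := ⟨n - 2, by omega⟩
    exact lobC_continuous a ha m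
  have hint : Integrable (lobC a n) := by
    obtain ⟨m, rfl⟩ : ∃ m, n = m + 1 := ⟨n - 1, by omega⟩
    exact lobC_integrable a ha m
  have hFint : Integrable (𝓕 (lobC a n)) := by
    have := ((sinc_pow_integrable n hn).comp_mul_left' hs0.ne').ofReal (𝕜 := ℂ)
    refine this.congr (Eventually.of_forall fun w => ?_)
    exact (hF w).symm
  have hinv := congrFun (hcont.fourierInv_fourier_eq hint hFint) (s * x)
  rw [Real.fourierInv_eq'] at hinv
  simp_rw [hF] at hinv
  have hsub := Measure.integral_comp_mul_left (fun v : ℝ =>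
    Complex.exp (↑(2 * Real.pi * v * x) * Complex.I) *
      ((Real.sinc (2 * Real.pi * √(3 / n) * v) ^ n : ℝ) : ℂ)) s
  have e : (lobStar a n x : ℂ) = s * lobC a n (s * x) := by
    simp [lobStar, lobC, hs]
  rw [e, ← hinv]
  have hsc : (s : ℂ) ≠ 0 := by exact_mod_cast hs0.ne'
  have e2 : (∫ v : ℝ, Complex.exp (↑(2 * Real.pi * inner ℝ v (s * x)) * Complex.I) •
      ((Real.sinc (2 * Real.pi * √(3 / n) * (s * v)) ^ n : ℝ) : ℂ)) =
      ∫ v : ℝ, Complex.exp (↑(2 * Real.pi * (s * v) * x) * Complex.I) *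
      ((Real.sinc (2 * Real.pi * √(3 / n) * (s * v)) ^ n : ℝ) : ℂ) := by
    congr 1; ext v
    rw [smul_eq_mul]
    congr 4
    simp only [RCLike.inner_apply, conj_trivial]
    ring
  rw [e2, hsub, abs_of_pos (by positivity), Complex.real_smul, ← mul_assoc]
  push_cast
  rw [mul_inv_cancel₀ hsc, one_mul]

theorem gauss_integrable :
    Integrable (fun v : ℝ => Real.exp (-(2 * Real.pi ^ 2 * v ^ 2))) := by
  simpa [neg_mul] using integrable_exp_neg_mul_sq (b := 2 * Real.pi ^ 2) (by positivity)

theorem lobStar_sub_le (a : ℝ) (ha : 0 < a) (n : ℕ) (hn : 2 ≤ n) (x : ℝ) :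
    |stdNormal x - lobStar a n x| ≤ ∫ v : ℝ, |Real.sinc (2 * Real.pi * √(3 / n) * v) ^ n -
      Real.exp (-(2 * Real.pi ^ 2 * v ^ 2))| := by
  have hb : ∀ f : ℝ → ℝ, Integrable f → Integrable (fun v : ℝ =>
      Complex.exp (↑(2 * Real.pi * v * x) * Complex.I) * ((f v : ℝ) : ℂ)) := by
    intro f hf
    refine (hf.ofReal (𝕜 := ℂ)).bdd_mul (c := 1) ?_ ?_
    · exact (by fun_prop : Continuous fun v : ℝ =>
        Complex.exp (↑(2 * Real.pi * v * x) * Complex.I)).aestronglyMeasurable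
    · exact Eventually.of_forall fun v => (Complex.norm_exp_ofReal_mul_I _).le
  rw [abs_sub_comm, ← Real.norm_eq_abs, ← Complex.norm_real, Complex.ofReal_sub,
    lobStar_eq a ha n hn, stdNormal_eq,
    ← integral_sub (hb _ (sinc_pow_integrable n hn)) (hb _ gauss_integrable)]
  refine (norm_integral_le_integral_norm _).trans (le_of_eq ?_)
  congr 1; ext v
  rw [← mul_sub, norm_mul, Complex.norm_exp_ofReal_mul_I, one_mul, ← Complex.ofReal_sub,
    Complex.norm_real, Real.norm_eq_abs]

theorem integral_tendsto_zero :
    Tendsto (fun n : ℕ => ∫ v : ℝ, |Real.sinc (2 * Real.pi * √(3 / n) * v) ^ n -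
      Real.exp (-(2 * Real.pi ^ 2 * v ^ 2))|) atTop (𝓝 0) := by
  have : (0 : ℝ) = ∫ v : ℝ, (0 : ℝ) := by simp
  rw [this]
  refine tendsto_integral_filter_of_dominated_convergence
    (fun v => (1 + v ^ 2)⁻¹ + Real.exp (-(2 * Real.pi ^ 2 * v ^ 2))) ?_ ?_
    (integrable_inv_one_add_sq.add gauss_integrable) ?_
  · refine Eventually.of_forall fun n => Continuous.aestronglyMeasurable ?_
    exact (((Real.continuous_sinc.comp (by fun_prop)).pow n).sub (by fun_prop)).abs
  · filter_upwards [eventually_ge_atTop 2] with n hn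
    refine Eventually.of_forall fun v => ?_
    rw [Real.norm_eq_abs, abs_abs]
    refine (abs_sub _ _).trans (add_le_add (sinc_pow_bound n hn v) ?_)
    rw [Real.abs_exp]
  · refine Eventually.of_forall fun v => ?_
    have h := ((sinc_pow_tendsto v).sub_const (Real.exp (-(2 * Real.pi ^ 2 * v ^ 2)))).abs
    simpa using h

theorem lobStar_tendstoUniformly_stdNormal (a : ℝ) (ha : 0 < a) :
    TendstoUniformly (fun n x => lobStar a n x) stdNormal atTop := by
  rw [Metric.tendstoUniformly_iff]
  intro ε hε
  filter_upwards [eventually_ge_atTop 2, integral_tendsto_zero.eventually_lt_const hε] with n hn h x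
  rw [Real.dist_eq]
  exact (lobStar_sub_le a ha n hn x).trans_lt h
end

section
/- For the normalized Lobachevsky splines f_n*(x) = a√(n/3) f_n(a√(n/3) x), the cumulative distribution functions converge: for every x ∈ ℝ, lim_{n→∞} ∫_{−∞}^{x} f_n*(t) dt = ∫_{−∞}^{x} (1/√(2π)) exp(−t²/2) dt. -/
open MeasureTheory Filter

lemma lob_one_eq (a : ℝ) : lob a 1 = (Set.Icc (-a) a).indicator (fun _ => 1 / (2 * a)) := by
  funext x
  simp [lob, Set.indicator_apply, abs_le]

/-- The law with density `lob a n`. -/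
noncomputable def lobM (a : ℝ) (n : ℕ) : Measure ℝ :=
  volume.withDensity (fun x => ENNReal.ofReal (lob a n x))

lemma integral_lob_one_mul (a : ℝ) (ha : 0 < a) (g : ℝ → ℝ) :
    ∫ x, lob a 1 x * g x = 1 / (2 * a) * ∫ x in (-a)..a, g x := by
  rw [intervalIntegral.integral_of_le (by linarith), ← integral_Icc_eq_integral_Ioc,
    ← integral_indicator measurableSet_Icc, ← integral_const_mul]
  congr 1
  funext x
  by_cases h : x ∈ Set.Icc (-a) a <;> simp [lob_one_eq, h]

lemma lob_one_nonneg (a : ℝ) (ha : 0 < a) (x : ℝ) : 0 ≤ lob a 1 x := by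
  simp only [lob]; split_ifs <;> positivity

lemma lob_one_measurable (a : ℝ) : Measurable (lob a 1) := by
  rw [lob_one_eq]; exact measurable_const.indicator measurableSet_Icc

lemma integral_lobM_one (a : ℝ) (ha : 0 < a) (g : ℝ → ℝ) :
    ∫ x, g x ∂(lobM a 1) = 1 / (2 * a) * ∫ x in (-a)..a, g x := by
  rw [← integral_lob_one_mul a ha]
  have := integral_withDensity_eq_integral_smul (μ := volume)
    (f := fun x => (lob a 1 x).toNNReal) (lob_one_measurable a).real_toNNReal g
  unfold lobM ENNReal.ofReal
  rw [this]
  congr 1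
  funext x
  simp [NNReal.smul_def, lob_one_nonneg a ha x]

lemma lob_one_integrable (a : ℝ) : Integrable (lob a 1) := by
  rw [lob_one_eq, integrable_indicator_iff measurableSet_Icc]
  exact continuousOn_const.integrableOn_compact isCompact_Icc

lemma lobM_one_prob (a : ℝ) (ha : 0 < a) : IsProbabilityMeasure (lobM a 1) := by
  constructor
  rw [lobM, withDensity_apply _ MeasurableSet.univ, Measure.restrict_univ,
    ← ofReal_integral_eq_lintegral_ofReal (lob_one_integrable a)
      (ae_of_all _ (lob_one_nonneg a ha))]
  have := integral_lob_one_mul a ha (fun _ => 1)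
  simp only [mul_one] at this
  rw [this]
  simp
  field_simp
  norm_num

lemma lob_step (a : ℝ) (ha : 0 < a) (n : ℕ) (h0 : ∀ x, 0 ≤ lob a (n + 1) x)
    (hm : Measurable (lob a (n + 1))) (hi : Integrable (lob a (n + 1))) :
    (∀ x, 0 ≤ lob a (n + 2) x) ∧ Measurable (lob a (n + 2)) ∧
      lobM a (n + 2) = Measure.conv (lobM a 1) (lobM a (n + 1)) := by
  have hii : ∀ c d, IntervalIntegrable (lob a (n + 1)) volume c d :=
    fun c d => hi.intervalIntegrable
  refine ⟨fun x => ?_, ?_, ?_⟩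
  · simp only [lob]
    exact mul_nonneg (by positivity)
      (intervalIntegral.integral_nonneg (by linarith) fun t _ => h0 t)
  · have hc := intervalIntegral.continuous_primitive hii 0
    have : lob a (n + 2) = fun x => (1 / (2 * a)) *
        ((∫ t in (0:ℝ)..(x + a), lob a (n + 1) t) - ∫ t in (0:ℝ)..(x - a), lob a (n + 1) t) := by
      funext x
      rw [intervalIntegral.integral_interval_sub_left (hii _ _) (hii _ _)]
      simp only [lob]
    rw [this]
    have h1 : Continuous fun x : ℝ => ∫ t in (0:ℝ)..(x + a), lob a (n + 1) t :=
      hc.comp (continuous_id.add continuous_const)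
    have h2 : Continuous fun x : ℝ => ∫ t in (0:ℝ)..(x - a), lob a (n + 1) t :=
      hc.comp (continuous_id.sub continuous_const)
    exact (continuous_const.mul (h1.sub h2)).measurable
  · unfold lobM
    rw [conv_withDensity_eq_lconvolution (lob_one_measurable a).ennreal_ofReal hm.ennreal_ofReal]
    congr 1
    funext x
    rw [lconvolution_def]
    simp_rw [← ENNReal.ofReal_mul (lob_one_nonneg a ha _)]
    have hs : Integrable (fun y => lob a (n + 1) (-y + x)) := by
      have := hi.comp_sub_left x
      refine this.congr (ae_of_all _ fun y => ?_)
      simp only; congr 1; ring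
    have hint : Integrable (fun y => lob a 1 y * lob a (n + 1) (-y + x)) := by
      refine hs.bdd_mul (c := 1 / (2 * a)) (lob_one_measurable a).aestronglyMeasurable
        (ae_of_all _ fun y => ?_)
      rw [Real.norm_of_nonneg (lob_one_nonneg a ha y)]
      simp only [lob]; split_ifs
      · exact le_rfl
      · positivity
    rw [← ofReal_integral_eq_lintegral_ofReal hint
      (ae_of_all _ fun y => mul_nonneg (lob_one_nonneg a ha y) (h0 _)),
      integral_lob_one_mul a ha]
    congr 1
    simp only [lob]
    congr 1
    have := intervalIntegral.integral_comp_sub_left (a := -a) (b := a) (lob a (n + 1)) x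
    rw [sub_neg_eq_add] at this
    rw [← this]
    congr 1
    funext y
    congr 1; ring

lemma lob_main (a : ℝ) (ha : 0 < a) (n : ℕ) :
    (∀ x, 0 ≤ lob a (n + 1) x) ∧ Measurable (lob a (n + 1)) ∧ Integrable (lob a (n + 1)) ∧
      IsProbabilityMeasure (lobM a (n + 1)) ∧
      ∀ t, charFun (lobM a (n + 1)) t = charFun (lobM a 1) t ^ (n + 1) := by
  induction n with
  | zero =>
    exact ⟨lob_one_nonneg a ha, lob_one_measurable a, lob_one_integrable a, lobM_one_prob a ha,
      fun t => by simp⟩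
  | succ n ih =>
    obtain ⟨h0, hm, hi, hp, hc⟩ := ih
    obtain ⟨k0, km, kc⟩ := lob_step a ha n h0 hm hi
    have hp1 := lobM_one_prob a ha
    have kp : IsProbabilityMeasure (lobM a (n + 2)) := by rw [kc]; infer_instance
    refine ⟨k0, km, ?_, kp, fun t => ?_⟩
    · refine ⟨km.aestronglyMeasurable, ?_⟩
      rw [hasFiniteIntegral_iff_ofReal (ae_of_all _ k0)]
      have := measure_lt_top (lobM a (n + 2)) Set.univ
      rwa [lobM, withDensity_apply _ MeasurableSet.univ, Measure.restrict_univ] at this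
    · rw [kc, charFun_conv, hc, pow_succ' _ (n + 1)]

lemma lobStar_integral (a : ℝ) (ha : 0 < a) (n : ℕ) (x : ℝ) :
    ∫ t in Set.Iic x, lobStar a (n + 1) t =
      (((lobM a (n + 1)).map ((a * Real.sqrt ((n + 1 : ℕ) / 3))⁻¹ * ·)) (Set.Iic x)).toReal := by
  obtain ⟨h0, hm, hi, hp, hc⟩ := lob_main a ha n
  have hcpos : 0 < a * Real.sqrt ((n + 1 : ℕ) / 3) := by positivity
  unfold lobStar
  set c := a * Real.sqrt ((n + 1 : ℕ) / 3) with hcdef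
  rw [Measure.map_apply (by fun_prop) measurableSet_Iic]
  have hset : (fun y => c⁻¹ * y) ⁻¹' Set.Iic x = Set.Iic (c * x) := by
    ext y
    simp only [Set.mem_preimage, Set.mem_Iic]
    rw [inv_mul_le_iff₀ hcpos]
  rw [hset, lobM, withDensity_apply _ measurableSet_Iic,
    ← ofReal_integral_eq_lintegral_ofReal hi.integrableOn (ae_of_all _ h0),
    ENNReal.toReal_ofReal (integral_nonneg h0), integral_const_mul,
    ← integral_indicator measurableSet_Iic, ← integral_indicator measurableSet_Iic]
  have := Measure.integral_comp_mul_left ((Set.Iic (c * x)).indicator (lob a (n + 1))) c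
  rw [abs_of_pos (inv_pos.2 hcpos), smul_eq_mul] at this
  rw [← mul_right_inj' (inv_pos.2 hcpos).ne', ← this, inv_mul_cancel_left₀ hcpos.ne']
  congr 1
  funext y
  simp [Set.indicator_apply, mul_le_mul_iff_right₀ hcpos]

theorem lobStar_cdf_tendsto_normal_cdf (a : ℝ) (ha : 0 < a) (x : ℝ) :
    Tendsto (fun n => ∫ t in Set.Iic x, lobStar a n t) atTop
      (nhds (∫ t in Set.Iic x, stdNormal t)) := by
  rw [← tendsto_add_atTop_iff_nat 1]
  simp_rw [lobStar_integral a ha]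
  have hp := fun n => (lob_main a ha n).2.2.2.1
  have hp1 := lobM_one_prob a ha
  let ν : ℕ → ProbabilityMeasure ℝ := fun n =>
    ⟨(lobM a (n + 1)).map ((a * Real.sqrt ((n + 1 : ℕ) / 3))⁻¹ * ·),
      Measure.isProbabilityMeasure_map (by fun_prop)⟩
  let ν₀ : ProbabilityMeasure ℝ := ⟨ProbabilityTheory.gaussianReal 0 1, inferInstance⟩
  have hlim : Tendsto ν atTop (nhds ν₀) := by
    refine ProbabilityMeasure.tendsto_iff_tendsto_charFun.2 fun t => ?_
    have key := ProbabilityTheory.tendsto_charFun_inv_sqrt_mul_pow (P := lobM a 1)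
      (X := fun y => (Real.sqrt 3 / a) * y) (by fun_prop) ?_ ?_ t
    · rw [← tendsto_add_atTop_iff_nat 1] at key
      have h2 : charFun (ν₀ : Measure ℝ) t = Complex.exp (-t ^ 2 / 2) := by
        change charFun (ProbabilityTheory.gaussianReal 0 1) t = _
        rw [ProbabilityTheory.charFun_gaussianReal]
        simp [neg_div]
      rw [h2]
      refine key.congr fun n => ?_
      change _ = charFun ((lobM a (n + 1)).map ((a * Real.sqrt ((n + 1 : ℕ) / 3))⁻¹ * ·)) t
      rw [charFun_map_mul, charFun_map_mul, (lob_main a ha n).2.2.2.2]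
      congr 2
      rw [Real.sqrt_div (by positivity)]
      field_simp
    · rw [integral_lobM_one a ha, intervalIntegral.integral_const_mul, integral_id]
      simp
    · rw [integral_lobM_one a ha]
      simp only [Pi.pow_apply, mul_pow, div_pow]
      rw [intervalIntegral.integral_const_mul, integral_pow, Real.sq_sqrt (by norm_num)]
      field_simp
      ring
  have hfr : (ν₀ : Measure ℝ) (frontier (Set.Iic x)) = 0 := by
    rw [frontier_Iic]
    change ProbabilityTheory.gaussianReal 0 1 {x} = 0
    exact (ProbabilityTheory.gaussianReal_absolutelyContinuous 0 one_ne_zero) (by simp)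
  have hT := ProbabilityMeasure.tendsto_measure_of_null_frontier_of_tendsto' hlim hfr
  have hT2 := (ENNReal.tendsto_toReal (measure_ne_top (ν₀ : Measure ℝ) _)).comp hT
  suffices hE : ∫ t in Set.Iic x, stdNormal t = ((ν₀ : Measure ℝ) (Set.Iic x)).toReal by
    rw [hE]
    exact hT2
  change _ = (ProbabilityTheory.gaussianReal 0 1 (Set.Iic x)).toReal
  rw [ProbabilityTheory.gaussianReal_apply_eq_integral 0 one_ne_zero, ENNReal.toReal_ofReal
    (integral_nonneg fun _ => ProbabilityTheory.gaussianPDFReal_nonneg _ _ _)]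
  congr 1
  funext y
  simp [stdNormal, ProbabilityTheory.gaussianPDFReal]
end
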